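/- Let QH_α = S[q]/⟨σ_{k+1},...,σ_{n-1}, σ_n + (-1)^m α q⟩ where S = ℚ[c₁,...,c_m], n = m+k, and α ∈ ℚ. Then for every 1 ≤ p ≤ m and every partition λ ⊆ m×k, the quantum Pieri formula holds in QH_α: c_p·σ_λ = Σ_μ σ_μ + Σ_ν α q σ_ν, where the first sum runs over partitions μ ⊆ m×k obtained by adding a vertical strip of p boxes to λ, and the second sum is empty unless λ₁ = k, in which case it runs over partitions ν obtained by removing n−p boxes from the outer rim of λ with at least one box removed from each column. -/

import Mathlib

/-- The sequence `c = (c_1, …, c_m, 0, 0, …)` of variables of `S = ℚ[c_1, …, c_m]`,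
with `c_0 = 1` and `c_i = 0` for `i < 0` or `i > m`. -/
noncomputable def cVar (m : ℕ) : ℤ → MvPolynomial (Fin m) ℚ := fun i =>
  if h : 1 ≤ i ∧ i ≤ (m : ℤ) then MvPolynomial.X ⟨(i - 1).toNat, by omega⟩
  else if i = 0 then 1 else 0

/-- `σ_p = Δ_{(1^p)}(c) = det(c_{1+j-i})_{p×p}`, extended by `σ_p = 0` for `p < 0`. -/
noncomputable def sigmaP (m : ℕ) : ℤ → MvPolynomial (Fin m) ℚ := fun p =>
  if p < 0 then 0
  else Matrix.det (Matrix.of fun i j : Fin p.toNat => cVar m (1 + (j : ℤ) - (i : ℤ)))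

/-- `σ_λ = Δ_λ(σ) = det(σ_{λ_i+j-i})`. -/
noncomputable def sigmaL (m : ℕ) {l : ℕ} (lam : Fin l → ℕ) : MvPolynomial (Fin m) ℚ :=
  Matrix.det (Matrix.of fun i j : Fin l => sigmaP m ((lam i : ℤ) + (j : ℤ) - (i : ℤ)))

/-- The deformed quantum ring `QH_α = S[q]/⟨σ_{k+1}, …, σ_{n-1}, σ_n + (-1)^m α q⟩`
is the quotient of `Polynomial (MvPolynomial (Fin m) ℚ)` by this ideal. -/
noncomputable def qhIdeal (m k : ℕ) (α : ℚ) :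
    Ideal (Polynomial (MvPolynomial (Fin m) ℚ)) :=
  Ideal.span
    ((fun p : ℤ => Polynomial.C (sigmaP m p)) '' Set.Icc ((k : ℤ) + 1) ((m : ℤ) + k - 1) ∪
      {Polynomial.C (sigmaP m ((m : ℤ) + k)) +
        (-1) ^ m * Polynomial.C (MvPolynomial.C α) * Polynomial.X})

/-! The generating function of the `σ_r` is inverse to `1 - c_1 t + c_2 t² - ⋯ ± c_m t^m`, so the
matrix `A = (σ_{λ_i+j-i})` and its shift `A' = (σ_{λ_i+1+j-i})` satisfy `A' = A K`, where `K` is the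
companion matrix of `t^m - c_1 t^{m-1} + ⋯ ± c_m`. Comparing coefficients of `t^p` in
`det(A + t A') = det A · det(1 + t K)` gives `c_p σ_λ = ∑ σ_{λ + 1_I}` over the `p`-element sets `I`
of rows; the terms that are not partitions have two equal rows.

In `QH_α` the surviving shapes with `μ₁ = k + 1` have a first row whose only nonzero entry is
`σ_n = (-1)^{m-1} α q`, in the last column. Expanding along it removes the first row of `μ` and the
first box of every other row, that is a rim hook of `n` boxes, and leaves `α q σ_ν`. -/

section Determinants
open Finset Matrix Polynomial

variable {R : Type*} [CommRing R]

lemma coeff_det_map_C_add_X_smul {ι : Type*} [Fintype ι] [DecidableEq ι] (A B : Matrix ι ι R)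
    (p : ℕ) : (A.map C + (X : R[X]) • B.map C).det.coeff p =
      ∑ s ∈ powersetCard p univ, (of fun i j => if i ∈ s then B i j else A i j).det := by
  have scale_rows (s : Finset ι) :
      (of fun i j => if i ∈ s then X * C (B i j) else C (A i j)).det =
        C (of fun i j => if i ∈ s then B i j else A i j).det * X ^ #s := by
    have := det_mul_column (fun i => if i ∈ s then (X : R[X]) else 1)
      (C.mapMatrix (of fun i j => if i ∈ s then B i j else A i j))
    rw [prod_ite_mem, univ_inter, prod_const, ← RingHom.map_det, mul_comm] at this
    rw [← this]
    congr 1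
    ext1 i j
    by_cases hi : i ∈ s <;> simp [hi]
  have expand : (A.map C + (X : R[X]) • B.map C).det =
      ∑ s : Finset ι, C (of fun i j => if i ∈ s then B i j else A i j).det * X ^ #s := by
    rw [add_comm]
    refine ((detRowAlternating (R := R[X])).map_add_univ (X • B.map C) (A.map C)).trans
      (sum_congr rfl fun s _ => ?_)
    rw [← scale_rows]
    change det _ = _
    congr 1
    ext1 i j
    simp only [of_apply, Finset.piecewise]
    split_ifs <;> rfl
  rw [expand, finsetSum_coeff, powersetCard_eq_filter, powerset_univ, sum_filter]
  simp only [coeff_C_mul_X_pow, eq_comm]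

lemma sum_det_ite_mem_mul_eq_det_mul {ι : Type*} [Fintype ι] [DecidableEq ι] (A K : Matrix ι ι R)
    {p : ℕ} (hp : p ≤ Fintype.card ι) :
    ∑ s ∈ powersetCard p univ, (of fun i j => if i ∈ s then (A * K) i j else A i j).det =
      A.det * ((-1) ^ p * K.charpoly.coeff (Fintype.card ι - p)) := by
  have factor : A.map C + (X : R[X]) • (A * K).map C =
      C.mapMatrix A * (1 + (X : R[X]) • K.map C) := by
    rw [mul_add, mul_one, mul_smul_comm, RingHom.mapMatrix_apply, Matrix.map_mul]
  rw [← coeff_det_map_C_add_X_smul, factor, det_mul, ← RingHom.map_det, coeff_C_mul,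
    coeff_det_one_add_X_smul_eq_sum_minors, charpoly_coeff_eq_sum_minors K p hp,
    ← mul_assoc ((-1) ^ p), ← mul_pow, neg_one_mul, neg_neg, one_pow, one_mul]

/-- The companion matrix of the monic polynomial `X ^ (n + 1) - ∑ i, d i * X ^ i`, with ones below
the diagonal and last column `d`. -/
def companion {n : ℕ} (d : Fin (n + 1) → R) : Matrix (Fin (n + 1)) (Fin (n + 1)) R :=
  of fun i j => if j = Fin.last n then d i else if (i : ℕ) = j + 1 then 1 else 0

lemma charpoly_companion {n : ℕ} (d : Fin (n + 1) → R) :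
    (companion d).charpoly = X ^ (n + 1) - ∑ i, C (d i) * X ^ (i : ℕ) := by
  induction n with
  | zero => simp [companion, charpoly]
  | succ n ih =>
    have first_minor : (charmatrix (companion d)).submatrix Fin.succ Fin.succ =
        charmatrix (companion fun i => d i.succ) := by
      ext1 i j
      simp [companion, charmatrix, diagonal_apply, Fin.ext_iff]
    have last_minor :
        ((charmatrix (companion d)).submatrix Fin.succ Fin.castSucc).det = (-1) ^ (n + 1) := by
      rw [det_of_isUpperTriangular]
      · have (i : Fin (n + 1)) : (i : ℕ) ≠ n + 1 := i.isLt.ne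
        simp [companion, charmatrix, Fin.ext_iff, this]
      · intro i j (hij : j < i)
        rw [Fin.lt_def] at hij
        have : (i : ℕ) + 1 ≠ j ∧ (j : ℕ) ≠ n + 1 ∧ (i : ℕ) ≠ j := by omega
        simp [companion, charmatrix, Fin.ext_iff, this]
    have first_entry : charmatrix (companion d) 0 0 = X := by
      simp [companion, Fin.ext_iff]
    have last_entry : charmatrix (companion d) 0 (Fin.last (n + 1)) = -C (d 0) := by
      simp [companion, Fin.ext_iff]
    have middle_entry (j : Fin n) : charmatrix (companion d) 0 j.castSucc.succ = 0 := by
      simp [companion, charmatrix, Fin.ext_iff, j.isLt.ne]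
    have sign : ((-1 : R[X]) ^ (n + 1)) * (-1) ^ (n + 1) = 1 := by
      rw [← mul_pow, neg_one_mul, neg_neg, one_pow]
    calc (companion d).charpoly
        = X * (companion fun i => d i.succ).charpoly - C (d 0) := by
          rw [charpoly, det_succ_row_zero, Fin.sum_univ_succ, Fin.sum_univ_castSucc,
            Fin.succ_last, Fin.succAbove_last, last_minor, Fin.succAbove_zero, first_minor]
          simp only [first_entry, middle_entry, last_entry, charpoly, Fin.val_zero, Fin.val_last,
            Nat.succ_eq_add_one, pow_zero, one_mul, mul_zero, zero_mul, sum_const_zero, zero_add]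
          linear_combination (-C (d 0)) * sign
      _ = X ^ (n + 2) - ∑ i, C (d i) * X ^ (i : ℕ) := by
          rw [ih, Fin.sum_univ_succ (n := n + 1), mul_sub, mul_sum, ← pow_succ', sub_sub,
            add_comm (C (d 0) * _)]
          simp only [Fin.val_succ, Fin.val_zero, pow_zero, mul_one, pow_succ', mul_left_comm X]

lemma coeff_charpoly_companion {n : ℕ} {c : ℤ → R} (c_zero : c 0 = 1) {p : ℕ} (hp : p ≤ n + 1) :
    (companion fun i : Fin (n + 1) => (-1) ^ (n - i : ℕ) * c (n - i + 1)).charpoly.coeff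
      (n + 1 - p) = (-1) ^ p * c p := by
  rw [charpoly_companion, coeff_sub, coeff_X_pow, finsetSum_coeff]
  simp only [coeff_C_mul_X_pow]
  obtain rfl | hp0 := p.eq_zero_or_pos
  · rw [sum_eq_zero fun i _ => if_neg (by omega)]
    simp [c_zero]
  · rw [sum_eq_single_of_mem ⟨n + 1 - p, by omega⟩ (mem_univ _)
      fun i _ hi => if_neg fun h => hi (Fin.ext h.symm), if_neg (by omega), if_pos rfl, zero_sub]
    obtain ⟨p, rfl⟩ := Nat.exists_eq_succ_of_ne_zero hp0.ne'
    rw [show n - (n + 1 - p.succ) = p by omega,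
      show (n : ℤ) - (n + 1 - p.succ : ℕ) + 1 = p.succ by omega, pow_succ]
    ring

lemma mul_companion_castSucc {n : ℕ} (A : Matrix (Fin (n + 1)) (Fin (n + 1)) R)
    (d : Fin (n + 1) → R) (i : Fin (n + 1)) (j : Fin n) :
    (A * companion d) i j.castSucc = A i j.succ := by
  have entry (l : Fin (n + 1)) : companion d l j.castSucc = if l = j.succ then 1 else 0 := by
    simp [companion, Fin.ext_iff, j.isLt.ne]
  simp only [mul_apply, entry, mul_ite, mul_one, mul_zero, sum_ite_eq', mem_univ, if_true]

lemma mul_companion_last {n : ℕ} (A : Matrix (Fin (n + 1)) (Fin (n + 1)) R)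
    (d : Fin (n + 1) → R) (i : Fin (n + 1)) :
    (A * companion d) i (Fin.last n) = ∑ l, A i l * d l := by
  simp only [mul_apply, companion, of_apply, if_true]

/-- The determinant `Δ_a(h) = det(h_{a_i + j - i})` of the paper. -/
def jacobiTrudiDet (h : ℤ → R) {l : ℕ} (a : Fin l → ℤ) : R :=
  (of fun i j : Fin l => h (a i + j - i)).det

lemma mul_jacobiTrudiDet {n p : ℕ} {h c : ℤ → R} (c_zero : c 0 = 1) {a : Fin (n + 1) → ℤ}
    (hrec : ∀ i, h (a i + (n + 1) - i) =
      ∑ l ∈ range (n + 1), (-1) ^ l * c (l + 1) * h (a i + n - i - l)) (hp : p ≤ n + 1) :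
    c p * jacobiTrudiDet h a =
      ∑ s ∈ powersetCard p univ, jacobiTrudiDet h fun i => a i + if i ∈ s then 1 else 0 := by
  let A : Matrix (Fin (n + 1)) (Fin (n + 1)) R := of fun i j => h (a i + j - i)
  let K := companion fun i : Fin (n + 1) => (-1) ^ (n - i : ℕ) * c (n - i + 1)
  have shift (i j) : (A * K) i j = h (a i + 1 + j - i) := by
    refine Fin.lastCases ?_ (fun j => ?_) j
    · rw [mul_companion_last, show a i + 1 + (Fin.last n : ℕ) - i = a i + (n + 1) - i by
        rw [Fin.val_last]; ring, hrec, ← sum_range_reflect,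
        ← Fin.sum_univ_eq_sum_range fun l => (-1) ^ (n + 1 - 1 - l) *
          c ((n + 1 - 1 - l : ℕ) + 1) * h (a i + n - i - (n + 1 - 1 - l : ℕ))]
      refine sum_congr rfl fun l _ => ?_
      rw [Nat.add_sub_cancel, Nat.cast_sub l.is_le, mul_comm,
        show a i + n - i - (n - l) = a i + l - i by ring]
      rfl
    · rw [mul_companion_castSucc]
      change h (a i + (j + 1 : ℕ) - i) = h (a i + 1 + j - i)
      congr 1
      push_cast
      ring
  have expansion := sum_det_ite_mem_mul_eq_det_mul A K (p := p) (by rwa [Fintype.card_fin])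
  rw [Fintype.card_fin, coeff_charpoly_companion c_zero hp, ← mul_assoc ((-1) ^ p), ← mul_pow,
    neg_one_mul, neg_neg, one_pow, one_mul, mul_comm] at expansion
  refine expansion.symm.trans (sum_congr rfl fun s _ => congrArg det ?_)
  ext1 i j
  simp only [of_apply]
  split_ifs
  · exact shift i j
  · rw [add_zero]; rfl

lemma jacobiTrudiDet_eq_zero_of_sub_eq {l : ℕ} (h : ℤ → R) {a : Fin l → ℤ} {i j : Fin l}
    (hij : i ≠ j) (heq : a i - i = a j - j) : jacobiTrudiDet h a = 0 := by
  refine det_zero_of_row_eq hij (funext fun x => ?_)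
  simp only [of_apply]
  congr 1
  linear_combination heq

lemma jacobiTrudiDet_eq_zero_of_last_neg {n : ℕ} {h : ℤ → R} (h_neg : ∀ i < 0, h i = 0)
    {a : Fin (n + 1) → ℤ} (ha : a (Fin.last n) < 0) : jacobiTrudiDet h a = 0 := by
  refine det_eq_zero_of_row_eq_zero (Fin.last n) fun j => h_neg _ ?_
  have := j.is_le
  rw [Fin.val_last]
  omega

lemma jacobiTrudiDet_castSucc_of_last_eq_zero {n : ℕ} {h : ℤ → R} (h_neg : ∀ i < 0, h i = 0)
    (h_zero : h 0 = 1) {a : Fin (n + 1) → ℤ} (ha : a (Fin.last n) = 0) :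
    jacobiTrudiDet h a = jacobiTrudiDet h fun i : Fin n => a i.castSucc := by
  have last_row (j : Fin n) : h (a (Fin.last n) + j.castSucc - (Fin.last n : ℕ)) = 0 := by
    refine h_neg _ ?_
    rw [ha, Fin.val_last, Fin.val_castSucc]
    omega
  rw [jacobiTrudiDet, det_succ_row _ (Fin.last n), Fin.sum_univ_castSucc,
    sum_eq_zero fun j _ => by rw [of_apply, last_row, mul_zero, zero_mul], zero_add, of_apply, ha,
    zero_add, sub_self, h_zero, mul_one, ← two_mul, pow_mul, neg_one_sq, one_pow, one_mul,
    Fin.succAbove_last]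
  rfl

lemma jacobiTrudiDet_eq_mul_of_first_row {n : ℕ} {h : ℤ → R} {a : Fin (n + 1) → ℤ}
    (hz : ∀ r, a 0 ≤ r → r < a 0 + n → h r = 0) :
    jacobiTrudiDet h a =
      (-1) ^ n * h (a 0 + n) * jacobiTrudiDet h fun i : Fin n => a i.succ - 1 := by
  have first_row (j : Fin n) : h (a 0 + j.castSucc - (0 : Fin (n + 1))) = 0 := by
    refine hz _ ?_ ?_ <;> simp
  rw [jacobiTrudiDet, det_succ_row_zero, Fin.sum_univ_castSucc,
    sum_eq_zero fun j _ => by rw [of_apply, first_row, mul_zero, zero_mul], zero_add, of_apply,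
    Fin.val_last, Fin.val_zero, Nat.cast_zero, sub_zero, Fin.succAbove_last]
  refine congrArg (_ * det ·) ?_
  ext1 i j
  simp only [submatrix_apply, of_apply, Fin.val_succ, Fin.val_castSucc]
  congr 1
  push_cast
  ring

end Determinants

section DualSequence
open Finset Matrix

variable {R : Type*} [CommRing R]

/-- The sequence `σ_r = Δ_{(1^r)}(c)` dual to `c`, extended by zero to negative `r`. When
`c 0 = 1` and `c` vanishes at negative integers, its generating function is inverse to that of
`(-1) ^ i * c i`. -/
def dualSeq (c : ℤ → R) (r : ℤ) : R :=
  if r < 0 then 0 else jacobiTrudiDet c fun _ : Fin r.toNat => 1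

lemma dualSeq_of_neg (c : ℤ → R) {r : ℤ} (hr : r < 0) : dualSeq c r = 0 := if_pos hr

lemma dualSeq_natCast (c : ℤ → R) (r : ℕ) :
    dualSeq c r = jacobiTrudiDet c fun _ : Fin r => 1 :=
  if_neg (by omega)

lemma dualSeq_zero (c : ℤ → R) : dualSeq c 0 = 1 :=
  (dualSeq_natCast c 0).trans det_fin_zero

/-- The square matrix of size `r + 1` with first row `f` and the rows of the Toeplitz matrix
`(c_{j - i})` below it; expanding its determinant yields the recursion for `dualSeq c`. -/
def consToeplitz (c : ℤ → R) (f : ℕ → R) (r : ℕ) : Matrix (Fin (r + 1)) (Fin (r + 1)) R :=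
  of (Fin.cons (fun j => f j) fun i j => c (j - i))

lemma det_consToeplitz_succ {c : ℤ → R} (c_zero : c 0 = 1) (c_neg : ∀ i < 0, c i = 0)
    (f : ℕ → R) (r : ℕ) : (consToeplitz c f (r + 1)).det =
      f 0 * dualSeq c (r + 1) - (consToeplitz c (fun j => f (j + 1)) r).det := by
  have first_minor : ((consToeplitz c f (r + 1)).submatrix Fin.succ Fin.succ).det =
      dualSeq c (r + 1) := by
    rw [← Nat.cast_succ, dualSeq_natCast]
    refine congrArg det ?_
    ext1 i j
    simp only [consToeplitz, submatrix_apply, of_apply, Fin.cons_succ, Fin.val_succ]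
    congr 1
    push_cast
    ring
  have second_minor : (consToeplitz c f (r + 1)).submatrix (Fin.succAbove 1) Fin.succ =
      consToeplitz c (fun j => f (j + 1)) r := by
    ext1 i j
    refine Fin.cases ?_ (fun i => ?_) i <;> simp [consToeplitz]
  have first_entry : consToeplitz c f (r + 1) 0 0 = f 0 := rfl
  have second_entry : consToeplitz c f (r + 1) 1 0 = 1 := c_zero
  have lower_entry (i : Fin r) : consToeplitz c f (r + 1) i.succ.succ 0 = 0 := by
    exact c_neg _ (by simp; omega)
  rw [det_succ_column_zero, Fin.sum_univ_succ, Fin.sum_univ_succ,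
    sum_eq_zero fun i _ => by rw [lower_entry, mul_zero, zero_mul], Fin.succAbove_zero,
    first_minor, first_entry, Fin.succ_zero_eq_one, second_minor, second_entry, Fin.val_zero,
    Fin.val_one]
  ring

lemma det_consToeplitz {c : ℤ → R} (c_zero : c 0 = 1) (c_neg : ∀ i < 0, c i = 0) (f : ℕ → R)
    (r : ℕ) : (consToeplitz c f r).det =
      ∑ l ∈ range (r + 1), (-1) ^ l * f l * dualSeq c (r - l) := by
  induction r generalizing f with
  | zero => simp [consToeplitz, dualSeq_zero]
  | succ r ih =>
    rw [det_consToeplitz_succ c_zero c_neg, ih, sum_range_succ' _ (r + 1), sub_eq_neg_add,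
      ← sum_neg_distrib]
    congr 1
    · refine sum_congr rfl fun l _ => ?_
      rw [pow_succ, Nat.cast_succ, Nat.cast_succ, add_sub_add_right_eq_sub]
      ring
    · rw [pow_zero, one_mul, Nat.cast_zero, sub_zero, Nat.cast_succ]

lemma dualSeq_add_one {m : ℕ} {c : ℤ → R} (c_zero : c 0 = 1) (c_neg : ∀ i < 0, c i = 0)
    (c_gt : ∀ i, (m : ℤ) < i → c i = 0) (r : ℕ) :
    dualSeq c (r + 1) = ∑ l ∈ range m, (-1) ^ l * c (l + 1) * dualSeq c (r - l) := by
  have full : dualSeq c (r + 1) =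
      ∑ l ∈ range (r + 1), (-1) ^ l * c (l + 1) * dualSeq c (r - l) := by
    rw [← det_consToeplitz c_zero c_neg fun l => c (l + 1), ← Nat.cast_succ, dualSeq_natCast]
    refine congrArg det ?_
    ext1 i j
    refine Fin.cases ?_ (fun i => ?_) i
    · simp [consToeplitz, add_comm]
    · simp [consToeplitz, add_comm]
  rw [full]
  trans ∑ l ∈ range (r + 1 + m), (-1) ^ l * c (l + 1) * dualSeq c (r - l)
  · refine sum_subset (range_subset_range.2 (by omega)) fun l _ hl => ?_
    rw [mem_range] at hl
    rw [dualSeq_of_neg _ (by omega), mul_zero]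
  · refine (sum_subset (range_subset_range.2 (by omega)) fun l _ hl => ?_).symm
    rw [mem_range] at hl
    rw [c_gt _ (by omega), mul_zero, zero_mul]

lemma map_jacobiTrudiDet {S : Type*} [CommRing S] (φ : R →+* S) (h : ℤ → R) {l : ℕ}
    (a : Fin l → ℤ) : φ (jacobiTrudiDet h a) = jacobiTrudiDet (fun i => φ (h i)) a := by
  rw [jacobiTrudiDet, RingHom.map_det]
  rfl

lemma map_dualSeq {S : Type*} [CommRing S] (φ : R →+* S) (c : ℤ → R) (r : ℤ) :
    φ (dualSeq c r) = dualSeq (fun i => φ (c i)) r := by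
  rw [dualSeq, apply_ite φ, map_zero, map_jacobiTrudiDet, dualSeq]

end DualSequence

section Shapes
open Finset

open scoped Classical in
/-- The partitions `μ ⊆ m × k` obtained from `λ` by adding a vertical strip of `p` boxes. -/
noncomputable def verticalStripAdditions {m : ℕ} (k p : ℕ) (lam : Fin m → ℕ) :
    Finset (Fin m → ℕ) :=
  (Fintype.piFinset fun _ : Fin m => range (k + 1)) |>.filter fun mu : Fin m → ℕ =>
    (∀ i j : Fin m, i ≤ j → mu j ≤ mu i) ∧
    (∀ i, lam i ≤ mu i ∧ mu i ≤ lam i + 1) ∧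
    (∑ i, mu i) = (∑ i, lam i) + p

open scoped Classical in
/-- The partitions `ν ⊆ m × k` obtained from `λ` by removing `m + k - p` boxes of its outer rim, at
least one from each of the `k` columns. -/
noncomputable def rimRemovals {m : ℕ} (hm : 0 < m) (k p : ℕ) (lam : Fin m → ℕ) :
    Finset (Fin m → ℕ) :=
  (Fintype.piFinset fun _ : Fin m => range (k + 1)) |>.filter fun nu : Fin m → ℕ =>
    lam ⟨0, hm⟩ = k ∧
    (∀ i j : Fin m, i ≤ j → nu j ≤ nu i) ∧
    (∀ i, nu i ≤ lam i) ∧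
    (∑ i, nu i) + (m + k - p) = (∑ i, lam i) ∧
    (∀ i j : Fin m, (j : ℕ) = (i : ℕ) + 1 → lam j ≤ nu i + 1) ∧
    (∀ j ∈ Icc 1 k, ∃ i, nu i < j ∧ j ≤ lam i)

lemma mem_verticalStripAdditions {m k p : ℕ} {lam mu : Fin m → ℕ} :
    mu ∈ verticalStripAdditions k p lam ↔ (∀ i, mu i ≤ k) ∧ Antitone mu ∧
      (∀ i, lam i ≤ mu i ∧ mu i ≤ lam i + 1) ∧ ∑ i, mu i = ∑ i, lam i + p := by
  simp only [verticalStripAdditions, mem_filter, Fintype.mem_piFinset, mem_range,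
    Nat.lt_succ_iff, Antitone]

/-- The shape `(k + 1, ν₁ + 1, …, νₙ + 1)` obtained by adding a rim hook of length `n + k + 1` to
the partition `(ν₁, …, νₙ, 0)`, running from column `k + 1` of row `1` to column `1` of
row `n + 1`. -/
def addRimHook {n : ℕ} (k : ℕ) (nu : Fin (n + 1) → ℕ) : Fin (n + 1) → ℕ :=
  Fin.cons (k + 1) fun i : Fin n => nu i.castSucc + 1

lemma addRimHook_zero {n : ℕ} (k : ℕ) (nu : Fin (n + 1) → ℕ) : addRimHook k nu 0 = k + 1 := rfl

lemma addRimHook_succ {n : ℕ} (k : ℕ) (nu : Fin (n + 1) → ℕ) (i : Fin n) :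
    addRimHook k nu i.succ = nu i.castSucc + 1 := rfl

lemma sum_addRimHook {n : ℕ} (k : ℕ) {nu : Fin (n + 1) → ℕ} (hnu : nu (Fin.last n) = 0) :
    ∑ i, addRimHook k nu i = ∑ i, nu i + (n + 1 + k) := by
  rw [Fin.sum_univ_succ, Fin.sum_univ_castSucc nu, hnu]
  simp only [addRimHook_zero, addRimHook_succ, sum_add_distrib, sum_const, card_univ,
    Fintype.card_fin, smul_eq_mul, mul_one]
  ring

lemma antitone_addRimHook_iff {n k : ℕ} {nu : Fin (n + 1) → ℕ} (hnu : nu (Fin.last n) = 0) :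
    Antitone (addRimHook k nu) ↔ Antitone nu ∧ nu 0 ≤ k := by
  obtain _ | n := n
  · have : nu 0 = 0 := hnu
    simp [Subsingleton.antitone, this]
  · rw [Fin.antitone_iff_succ_le, Fin.antitone_iff_succ_le, Fin.forall_fin_succ,
      Fin.forall_fin_succ']
    simp only [Fin.castSucc_zero, addRimHook_zero, addRimHook_succ,
      add_le_add_iff_right, Fin.succ_last, Fin.castSucc_succ, hnu, zero_le, and_true]
    exact and_comm

lemma addRimHook_injOn {n k : ℕ} :
    Set.InjOn (addRimHook (n := n) k) {nu | nu (Fin.last n) = 0} := by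
  intro nu hnu nu' hnu' heq
  funext i
  refine Fin.lastCases (hnu.trans hnu'.symm) (fun i => ?_) i
  exact Nat.succ_injective (congrFun heq i.succ)

lemma exists_addRimHook_eq {n k : ℕ} {mu : Fin (n + 1) → ℕ} (mu_zero : mu 0 = k + 1)
    (mu_pos : ∀ i, 0 < mu i) : ∃ nu, nu (Fin.last n) = 0 ∧ addRimHook k nu = mu := by
  refine ⟨Fin.snoc (fun i : Fin n => mu i.succ - 1) 0, Fin.snoc_last .., funext fun i => ?_⟩
  refine Fin.cases mu_zero.symm (fun i => ?_) i
  rw [addRimHook_succ, Fin.snoc_castSucc, Nat.sub_add_cancel (mu_pos _)]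

lemma forall_exists_column_iff {n k : ℕ} {lam nu : Fin (n + 1) → ℕ} (lam_anti : Antitone lam)
    (lam_zero : lam 0 = k) (nu_anti : Antitone nu) (nu_le : ∀ i, nu i ≤ lam i) :
    (∀ j ∈ Icc 1 k, ∃ i, nu i < j ∧ j ≤ lam i) ↔
      nu (Fin.last n) = 0 ∧ ∀ i : Fin n, nu i.castSucc ≤ lam i.succ := by
  have nu_le_k (i) : nu i ≤ k := (nu_le i).trans (lam_zero ▸ lam_anti (Fin.zero_le i))
  constructor
  · intro column
    constructor
    · by_contra hpos
      obtain ⟨i, hi, -⟩ := column _ (mem_Icc.2 ⟨Nat.pos_of_ne_zero hpos, nu_le_k _⟩)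
      exact hi.not_ge (nu_anti (Fin.le_last i))
    · intro i
      by_contra! hlt
      obtain ⟨i', hnu, hlam⟩ := column (nu i.castSucc) (mem_Icc.2 ⟨by omega, nu_le_k _⟩)
      have : i.castSucc < i' := nu_anti.reflect_lt hnu
      exact (hlt.trans_le hlam).not_ge (lam_anti (Fin.castSucc_lt_iff_succ_le.1 this))
  · rintro ⟨last_zero, overlap⟩ j hj
    rw [mem_Icc] at hj
    by_contra! hmiss
    have nu_ge (i) : j ≤ nu i := by
      induction i using Fin.induction with
      | zero => exact le_of_not_gt fun h => (hmiss 0 h).not_ge (lam_zero ▸ hj.2)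
      | succ i ih => exact le_of_not_gt fun h => (hmiss _ h).not_ge (ih.trans (overlap i))
    have := nu_ge (Fin.last n)
    omega

lemma mem_rimRemovals {m k p : ℕ} {hm : 0 < m} {lam nu : Fin m → ℕ} :
    nu ∈ rimRemovals hm k p lam ↔ (∀ i, nu i ≤ k) ∧ lam ⟨0, hm⟩ = k ∧ Antitone nu ∧
      (∀ i, nu i ≤ lam i) ∧ ∑ i, nu i + (m + k - p) = ∑ i, lam i ∧
      (∀ i j : Fin m, (j : ℕ) = i + 1 → lam j ≤ nu i + 1) ∧
      ∀ j ∈ Icc 1 k, ∃ i, nu i < j ∧ j ≤ lam i := by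
  simp only [rimRemovals, mem_filter, Fintype.mem_piFinset, mem_range, Nat.lt_succ_iff, Antitone]

lemma mem_rimRemovals_iff_addRimHook_mem {n k p : ℕ} {lam nu : Fin (n + 1) → ℕ} (hp : p ≤ n + 1)
    (lam_anti : Antitone lam) (lam_le : ∀ i, lam i ≤ k) :
    nu ∈ rimRemovals n.add_one_pos k p lam ↔
      nu (Fin.last n) = 0 ∧ addRimHook k nu ∈ verticalStripAdditions (k + 1) p lam := by
  rw [mem_rimRemovals, mem_verticalStripAdditions]
  constructor
  · rintro ⟨nu_le_k, lam_zero, nu_anti, nu_le, hsum, rim, column⟩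
    obtain ⟨last_zero, overlap⟩ :=
      (forall_exists_column_iff lam_anti lam_zero nu_anti nu_le).1 column
    have hook_anti := (antitone_addRimHook_iff last_zero).2 ⟨nu_anti, nu_le_k 0⟩
    refine ⟨last_zero, fun i => hook_anti (Fin.zero_le i), hook_anti,
      Fin.forall_fin_succ.2 ⟨?_, fun i => ⟨rim _ _ rfl, Nat.succ_le_succ (overlap i)⟩⟩, ?_⟩
    · rw [addRimHook_zero]
      change lam 0 = k at lam_zero
      omega
    · rw [sum_addRimHook k last_zero]
      omega
  · rintro ⟨last_zero, -, hook_anti, strip, hsum⟩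
    obtain ⟨nu_anti, nu_zero⟩ := (antitone_addRimHook_iff last_zero).1 hook_anti
    have lam_zero : lam 0 = k :=
      (lam_le 0).antisymm (Nat.succ_le_succ_iff.1 (strip 0).2)
    have overlap (i : Fin n) : nu i.castSucc ≤ lam i.succ :=
      Nat.succ_le_succ_iff.1 (strip i.succ).2
    have nu_le : ∀ i, nu i ≤ lam i := Fin.forall_fin_succ'.2
      ⟨fun i => (overlap i).trans (lam_anti i.castSucc_le_succ), last_zero ▸ Nat.zero_le _⟩
    refine ⟨fun i => (nu_le i).trans (lam_le i), lam_zero, nu_anti, nu_le, ?_, fun i j hij => ?_,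
      (forall_exists_column_iff lam_anti lam_zero nu_anti nu_le).2 ⟨last_zero, overlap⟩⟩
    · rw [sum_addRimHook k last_zero] at hsum
      omega
    · obtain ⟨i', rfl⟩ : ∃ i' : Fin n, i = i'.castSucc := ⟨⟨i, by omega⟩, rfl⟩
      rw [show j = i'.succ from Fin.ext hij]
      exact (strip i'.succ).1

end Shapes

section Pieri
open Finset

variable {R : Type*} [CommRing R]

/-- The determinant `σ_λ = Δ_λ(σ)` of the sequence `σ` dual to `c`. -/
def schurDet (c : ℤ → R) {l : ℕ} (lam : Fin l → ℕ) : R :=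
  jacobiTrudiDet (dualSeq c) fun i => (lam i : ℤ)

lemma mul_schurDet_eq_sum_subsets {n p : ℕ} {c : ℤ → R} (c_zero : c 0 = 1)
    (c_neg : ∀ i < 0, c i = 0) (c_gt : ∀ i, ((n + 1 : ℕ) : ℤ) < i → c i = 0) (hp : p ≤ n + 1)
    (lam : Fin (n + 1) → ℕ) :
    c p * schurDet c lam =
      ∑ s ∈ powersetCard p univ, schurDet c fun i => lam i + if i ∈ s then 1 else 0 := by
  have hrec (i : Fin (n + 1)) : dualSeq c (lam i + (n + 1) - i) =
      ∑ l ∈ range (n + 1), (-1) ^ l * c (l + 1) * dualSeq c (lam i + n - i - l) := by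
    have := dualSeq_add_one c_zero c_neg c_gt (lam i + (n - i))
    rwa [Nat.cast_add, Nat.cast_sub i.is_le, ← add_sub_assoc, sub_add_eq_add_sub, add_assoc] at this
  rw [schurDet, mul_jacobiTrudiDet c_zero hrec hp]
  simp only [schurDet, Nat.cast_add, Nat.cast_ite, Nat.cast_one, Nat.cast_zero]

lemma schurDet_eq_zero_of_not_antitone {l : ℕ} (c : ℤ → R) {lam mu : Fin l → ℕ}
    (lam_anti : Antitone lam) (strip : ∀ i, lam i ≤ mu i ∧ mu i ≤ lam i + 1)
    (mu_not_anti : ¬ Antitone mu) : schurDet c mu = 0 := by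
  obtain _ | l := l
  · exact absurd (Subsingleton.antitone mu) mu_not_anti
  · rw [Fin.antitone_iff_succ_le] at mu_not_anti
    push Not at mu_not_anti
    obtain ⟨i, hi⟩ := mu_not_anti
    refine jacobiTrudiDet_eq_zero_of_sub_eq _ i.castSucc_lt_succ.ne ?_
    have := lam_anti i.castSucc_le_succ
    have := strip i.castSucc
    have := strip i.succ
    rw [Fin.val_succ, Fin.val_castSucc]
    omega

lemma sum_verticalStripAdditions_schurDet {n k p : ℕ} (c : ℤ → R) {lam : Fin n → ℕ}
    (lam_anti : Antitone lam) (lam_le : ∀ i, lam i ≤ k) :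
    ∑ mu ∈ verticalStripAdditions (k + 1) p lam, schurDet c mu =
      ∑ s ∈ powersetCard p univ, schurDet c fun i => lam i + if i ∈ s then 1 else 0 := by
  let add (s : Finset (Fin n)) (i : Fin n) : ℕ := lam i + if i ∈ s then 1 else 0
  let rows (mu : Fin n → ℕ) : Finset (Fin n) := univ.filter fun i => mu i = lam i + 1
  have sum_add (s) : ∑ i, add s i = ∑ i, lam i + #s := by simp [add, sum_add_distrib]
  have add_strip (s i) : lam i ≤ add s i ∧ add s i ≤ lam i + 1 := by
    simp only [add]
    split_ifs <;> omega
  have rows_add (s) : rows (add s) = s := by simp [rows, add]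
  have add_rows {mu} (hmu : mu ∈ verticalStripAdditions (k + 1) p lam) : add (rows mu) = mu := by
    funext i
    have := (mem_verticalStripAdditions.1 hmu).2.2.1 i
    simp only [add, rows, mem_filter, mem_univ, true_and]
    split_ifs <;> omega
  refine sum_of_injOn rows (Set.LeftInvOn.injOn fun mu => add_rows) ?_ ?_ ?_
  · intro mu hmu
    have hsum := (mem_verticalStripAdditions.1 hmu).2.2.2
    rw [← add_rows hmu, sum_add] at hsum
    exact mem_powersetCard_univ.2 (Nat.add_left_cancel hsum)
  · refine fun s hs hrows => schurDet_eq_zero_of_not_antitone c lam_anti (add_strip s) fun anti =>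
      hrows ⟨add s, mem_verticalStripAdditions.2 ⟨fun i => ?_, anti, add_strip s, ?_⟩, rows_add s⟩
    · exact (add_strip s i).2.trans (Nat.succ_le_succ (lam_le i))
    · rw [sum_add, mem_powersetCard_univ.1 hs]
  · exact fun mu hmu => congrArg (schurDet c) (add_rows hmu).symm

lemma mul_schurDet_eq_sum_verticalStripAdditions {n k p : ℕ} {c : ℤ → R} (c_zero : c 0 = 1)
    (c_neg : ∀ i < 0, c i = 0) (c_gt : ∀ i, ((n + 1 : ℕ) : ℤ) < i → c i = 0) (hp : p ≤ n + 1)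
    {lam : Fin (n + 1) → ℕ} (lam_anti : Antitone lam) (lam_le : ∀ i, lam i ≤ k) :
    c p * schurDet c lam = ∑ mu ∈ verticalStripAdditions (k + 1) p lam, schurDet c mu := by
  rw [mul_schurDet_eq_sum_subsets c_zero c_neg c_gt hp,
    sum_verticalStripAdditions_schurDet c lam_anti lam_le]

lemma schurDet_addRimHook {n k : ℕ} {c : ℤ → R} {x : R}
    (hz : ∀ r : ℤ, k < r → r < (n + 1 : ℕ) + k → dualSeq c r = 0)
    (htop : dualSeq c ((n + 1 : ℕ) + k) = -((-1) ^ (n + 1) * x)) {nu : Fin (n + 1) → ℕ}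
    (hnu : nu (Fin.last n) = 0) : schurDet c (addRimHook k nu) = x * schurDet c nu := by
  have first_row : ∀ r : ℤ, (addRimHook k nu 0 : ℤ) ≤ r → r < (addRimHook k nu 0 : ℤ) + n →
      dualSeq c r = 0 := by
    intro r hr hr'
    rw [addRimHook_zero] at hr hr'
    exact hz r (by omega) (by omega)
  rw [schurDet, jacobiTrudiDet_eq_mul_of_first_row first_row, addRimHook_zero,
    show ((k + 1 : ℕ) : ℤ) + n = (n + 1 : ℕ) + k by omega, htop, schurDet,
    jacobiTrudiDet_castSucc_of_last_eq_zero (fun _ => dualSeq_of_neg c) (dualSeq_zero c)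
      (Nat.cast_eq_zero.2 hnu)]
  simp only [addRimHook_succ, Nat.cast_succ, add_sub_cancel_right]
  rw [pow_succ, mul_neg_one, neg_mul, neg_neg, ← mul_assoc, ← mul_pow, neg_one_mul, neg_neg,
    one_pow, one_mul]

lemma schurDet_eq_zero_of_last_eq_zero {n k : ℕ} {c : ℤ → R}
    (hz : ∀ r : ℤ, k < r → r < (n + 1 : ℕ) + k → dualSeq c r = 0)
    {mu : Fin (n + 1) → ℕ} (mu_zero : mu 0 = k + 1) (mu_last : mu (Fin.last n) = 0) :
    schurDet c mu = 0 := by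
  obtain _ | n := n
  · exact absurd (mu_last.symm.trans mu_zero) (Nat.succ_ne_zero k).symm
  · rw [schurDet, jacobiTrudiDet_eq_mul_of_first_row fun r hr hr' => hz r (by omega) (by omega),
      jacobiTrudiDet_eq_zero_of_last_neg fun _ => dualSeq_of_neg c, mul_zero]
    rw [Fin.succ_last, mu_last]
    decide

lemma filter_verticalStripAdditions {m k p : ℕ} (hm : 0 < m) (lam : Fin m → ℕ) :
    (verticalStripAdditions (k + 1) p lam).filter (fun mu => mu ⟨0, hm⟩ ≤ k) =
      verticalStripAdditions k p lam := by
  ext mu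
  simp only [mem_filter, mem_verticalStripAdditions]
  constructor
  · rintro ⟨⟨-, mu_anti, hmu⟩, mu_zero⟩
    exact ⟨fun i => (mu_anti (Nat.zero_le i)).trans mu_zero, mu_anti, hmu⟩
  · rintro ⟨mu_le, hmu⟩
    exact ⟨⟨fun i => (mu_le i).trans k.le_succ, hmu⟩, mu_le _⟩

lemma sum_rimRemovals_mul_schurDet {n k p : ℕ} {c : ℤ → R} {x : R}
    (hz : ∀ r : ℤ, k < r → r < (n + 1 : ℕ) + k → dualSeq c r = 0)
    (htop : dualSeq c ((n + 1 : ℕ) + k) = -((-1) ^ (n + 1) * x)) (hp : p ≤ n + 1)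
    {lam : Fin (n + 1) → ℕ} (lam_anti : Antitone lam) (lam_le : ∀ i, lam i ≤ k) :
    ∑ nu ∈ rimRemovals n.add_one_pos k p lam, x * schurDet c nu =
      ∑ mu ∈ verticalStripAdditions (k + 1) p lam with ¬ mu 0 ≤ k, schurDet c mu := by
  have mem_iff {nu} := mem_rimRemovals_iff_addRimHook_mem (nu := nu) hp lam_anti lam_le
  refine sum_of_injOn (addRimHook k) ?_ ?_ ?_ ?_
  · exact addRimHook_injOn.mono fun nu hnu => (mem_iff.1 hnu).1
  · intro nu hnu
    exact mem_filter.2 ⟨(mem_iff.1 hnu).2, (Nat.lt_succ_self k).not_ge⟩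
  · intro mu hmu hmu'
    obtain ⟨hmu, mu_zero⟩ := mem_filter.1 hmu
    obtain ⟨mu_le, mu_anti, -⟩ := mem_verticalStripAdditions.1 hmu
    replace mu_zero : mu 0 = k + 1 := (mu_le 0).antisymm (not_le.1 mu_zero)
    refine schurDet_eq_zero_of_last_eq_zero hz mu_zero ?_
    by_contra mu_last
    obtain ⟨nu, nu_last, rfl⟩ := exists_addRimHook_eq mu_zero fun i =>
      (Nat.pos_of_ne_zero mu_last).trans_le (mu_anti i.le_last)
    exact hmu' ⟨nu, mem_iff.2 ⟨nu_last, hmu⟩, rfl⟩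
  · intro nu hnu
    exact (schurDet_addRimHook hz htop (mem_iff.1 hnu).1).symm

theorem quantum_pieri_general {m k p : ℕ} (hm : 0 < m) {c : ℤ → R} (c_zero : c 0 = 1)
    (c_neg : ∀ i < 0, c i = 0) (c_gt : ∀ i, (m : ℤ) < i → c i = 0) {x : R}
    (hz : ∀ r : ℤ, k < r → r < m + k → dualSeq c r = 0)
    (htop : dualSeq c (m + k) = -((-1) ^ m * x)) (hp : p ≤ m)
    {lam : Fin m → ℕ} (lam_anti : Antitone lam) (lam_le : ∀ i, lam i ≤ k) :
    c p * schurDet c lam =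
      ∑ mu ∈ verticalStripAdditions k p lam, schurDet c mu +
        ∑ nu ∈ rimRemovals hm k p lam, x * schurDet c nu := by
  obtain ⟨n, rfl⟩ := Nat.exists_eq_add_one.2 hm
  rw [mul_schurDet_eq_sum_verticalStripAdditions c_zero c_neg c_gt hp lam_anti lam_le,
    ← sum_filter_add_sum_filter_not _ fun mu => mu 0 ≤ k,
    sum_rimRemovals_mul_schurDet hz htop hp lam_anti lam_le]
  exact congrArg (· + _) (sum_congr (filter_verticalStripAdditions hm lam) fun _ _ => rfl)

end Pieri

section QuantumRing
open Polynomial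

lemma cVar_zero (m : ℕ) : cVar m 0 = 1 := by
  rw [cVar, dif_neg (by omega), if_pos rfl]

lemma cVar_of_neg (m : ℕ) {i : ℤ} (hi : i < 0) : cVar m i = 0 := by
  rw [cVar, dif_neg (by omega), if_neg (by omega)]

lemma cVar_of_gt {m : ℕ} {i : ℤ} (hi : (m : ℤ) < i) : cVar m i = 0 := by
  rw [cVar, dif_neg (by omega), if_neg (by omega)]

lemma map_sigmaP {Q : Type*} [CommRing Q] {m : ℕ} (φ : MvPolynomial (Fin m) ℚ →+* Q) (r : ℤ) :
    φ (sigmaP m r) = dualSeq (fun i => φ (cVar m i)) r :=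
  map_dualSeq φ (cVar m) r

lemma map_sigmaL {Q : Type*} [CommRing Q] {m l : ℕ} (φ : MvPolynomial (Fin m) ℚ →+* Q)
    (lam : Fin l → ℕ) : φ (sigmaL m lam) = schurDet (fun i => φ (cVar m i)) lam := by
  refine (map_jacobiTrudiDet φ (sigmaP m) fun i => (lam i : ℤ)).trans ?_
  simp only [map_sigmaP, schurDet]

lemma map_cVar_mul_sigmaL {Q : Type*} [CommRing Q] {m k p : ℕ} (hm : 0 < m)
    (φ : MvPolynomial (Fin m) ℚ →+* Q) {x : Q}
    (hz : ∀ r : ℤ, k < r → r < m + k → φ (sigmaP m r) = 0)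
    (htop : φ (sigmaP m (m + k)) = -((-1) ^ m * x)) (hp : p ≤ m) {lam : Fin m → ℕ}
    (lam_anti : Antitone lam) (lam_le : ∀ i, lam i ≤ k) :
    φ (cVar m p * sigmaL m lam) = ∑ mu ∈ verticalStripAdditions k p lam, φ (sigmaL m mu) +
      ∑ nu ∈ rimRemovals hm k p lam, x * φ (sigmaL m nu) := by
  simp only [map_sigmaP] at hz htop
  simp only [map_mul, map_sigmaL]
  exact quantum_pieri_general hm (by rw [cVar_zero, map_one])
    (fun i hi => by rw [cVar_of_neg m hi, map_zero])
    (fun i hi => by rw [cVar_of_gt hi, map_zero]) hz htop hp lam_anti lam_le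

lemma mk_sigmaP_eq_zero (m k : ℕ) (α : ℚ) {r : ℤ} (hkr : k < r) (hr : r < m + k) :
    Ideal.Quotient.mk (qhIdeal m k α) (C (sigmaP m r)) = 0 :=
  Ideal.Quotient.eq_zero_iff_mem.2 <|
    Ideal.subset_span <| Or.inl ⟨r, ⟨hkr, Int.le_sub_one_of_lt hr⟩, rfl⟩

lemma mk_sigmaP_top (m k : ℕ) (α : ℚ) :
    Ideal.Quotient.mk (qhIdeal m k α) (C (sigmaP m (m + k))) =
      -((-1) ^ m * Ideal.Quotient.mk (qhIdeal m k α) (C (MvPolynomial.C α) * X)) := by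
  have relation : C (sigmaP m (m + k)) + (-1) ^ m * C (MvPolynomial.C α) * X ∈ qhIdeal m k α :=
    Ideal.subset_span (Or.inr rfl)
  rw [← Ideal.Quotient.eq_zero_iff_mem, map_add] at relation
  rw [eq_neg_of_add_eq_zero_left relation, mul_assoc, map_mul, map_pow, map_neg, map_one]

end QuantumRing

open scoped Classical in
/-- The quantum Pieri formula in `QH_α`: for `1 ≤ p ≤ m` and `λ ⊆ m × k`,
`c_p σ_λ = ∑_μ σ_μ + ∑_ν α q σ_ν`, where `μ` runs over partitions in `m × k`
obtained by adding a vertical strip of `p` boxes to `λ`, and `ν` runs over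
partitions obtained by removing `n - p` boxes from the outer rim of `λ`
(at least one from each column), this second sum being empty unless `λ_1 = k`. -/
theorem quantum_pieri (m k : ℕ) (hm : 0 < m) (hk : 0 < k) (α : ℚ)
    (p : ℕ) (hp1 : 1 ≤ p) (hpm : p ≤ m) (lam : Fin m → ℕ)
    (hanti : ∀ i j : Fin m, i ≤ j → lam j ≤ lam i) (hbound : ∀ i, lam i ≤ k) :
    Ideal.Quotient.mk (qhIdeal m k α)
        (Polynomial.C (cVar m (p : ℤ) * sigmaL m lam)) =
      (∑ mu ∈ (Fintype.piFinset fun _ : Fin m => Finset.range (k + 1)) |>.filter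
          (fun mu : Fin m → ℕ =>
            (∀ i j : Fin m, i ≤ j → mu j ≤ mu i) ∧
            (∀ i, lam i ≤ mu i ∧ mu i ≤ lam i + 1) ∧
            (∑ i, mu i) = (∑ i, lam i) + p),
          Ideal.Quotient.mk (qhIdeal m k α) (Polynomial.C (sigmaL m mu))) +
      ∑ nu ∈ (Fintype.piFinset fun _ : Fin m => Finset.range (k + 1)) |>.filter
          (fun nu : Fin m → ℕ =>
            lam ⟨0, hm⟩ = k ∧
            (∀ i j : Fin m, i ≤ j → nu j ≤ nu i) ∧
            (∀ i, nu i ≤ lam i) ∧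
            (∑ i, nu i) + (m + k - p) = (∑ i, lam i) ∧
            (∀ i j : Fin m, (j : ℕ) = (i : ℕ) + 1 → lam j ≤ nu i + 1) ∧
            (∀ j ∈ Finset.Icc 1 k, ∃ i, nu i < j ∧ j ≤ lam i)),
        Ideal.Quotient.mk (qhIdeal m k α)
          (Polynomial.C (MvPolynomial.C α) * Polynomial.X * Polynomial.C (sigmaL m nu)) := by
  simp only [map_mul (Ideal.Quotient.mk _) (_ * Polynomial.X)]
  exact map_cVar_mul_sigmaL (Q := Polynomial (MvPolynomial (Fin m) ℚ) ⧸ qhIdeal m k α) hm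
    ((Ideal.Quotient.mk (qhIdeal m k α)).comp Polynomial.C)
    (fun _ => mk_sigmaP_eq_zero m k α) (mk_sigmaP_top m k α) hpm hanti hbound
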